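/- Let F be a field of characteristic zero, n ≥ 1, and W an F-vector space of dimension 2n. Let the group SL(W) act on W ⊕ W* by g·(w, ξ) = (g(w), ξ ∘ g⁻¹), and on each exterior power Λ^k(W ⊕ W*) by functoriality. Then the subspace of SL(W)-invariant vectors in Λ^k(W ⊕ W*) has dimension 0 if k is odd; dimension 1 if k is even with 0 ≤ k ≤ 4n and k ≠ 2n; and dimension 3 if k = 2n. -/

import Mathlib

/-- The subspace of `SL(W)`-invariant vectors in the `k`-th exterior power of `W ⊕ W*`,
where `g ∈ SL(W)` acts by `(w, ξ) ↦ (g w, ξ ∘ g⁻¹)` and on `⋀^k` by functoriality. -/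
noncomputable def slInvariants (F : Type*) [Field F]
    (W : Type*) [AddCommGroup W] [Module F W] (k : ℕ) :
    Submodule F (ExteriorAlgebra F (W × Module.Dual F W)) :=
  (⋀[F]^k (W × Module.Dual F W)) ⊓
    ⨅ (g : W ≃ₗ[F] W) (_ : LinearMap.det (g : W →ₗ[F] W) = 1),
      LinearMap.ker
        ((ExteriorAlgebra.map
            (LinearMap.prodMap (g : W →ₗ[F] W)
              (LinearMap.dualMap (g.symm : W →ₗ[F] W)))).toLinearMap - LinearMap.id)

open Module in
theorem aux_enum {F V I : Type*} [Field F] [AddCommGroup V] [Module F V] [LinearOrder I]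
    (b : Basis I F V) {k : ℕ} (a : Fin k → I) (ha : Function.Injective a) :
    ∃ ε : ℤˣ, ExteriorAlgebra.ιMulti F k (b ∘ a)
      = ε • b.ExteriorAlgebra (Finset.univ.image a) := by
  have hc : (Finset.univ.image a).card = k := by
    rw [Finset.card_image_of_injective _ ha]; simp
  rw [ExteriorAlgebra.basis_apply_ofCard b hc]
  unfold ExteriorAlgebra.ιMulti_family
  set o := Set.powersetCard.ofFinEmbEquiv.symm (Set.powersetCard.ofCard hc) with ho
  have hmem : ∀ i, ∃ j, o j = a i := by
    intro i
    have := (Set.powersetCard.mem_range_ofFinEmbEquiv_symm_iff_mem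
      (Set.powersetCard.ofCard hc) (a i)).mpr (by
        show a i ∈ Finset.univ.image a
        simp)
    exact this
  choose τ hτ using hmem
  have hτi : Function.Injective τ := by
    intro x y h
    apply ha
    rw [← hτ, ← hτ, h]
  let σ : Equiv.Perm (Fin k) := Equiv.ofBijective τ (Finite.injective_iff_bijective.mp hτi)
  refine ⟨Equiv.Perm.sign σ, ?_⟩
  rw [← AlternatingMap.map_perm]
  congr 1
  funext i
  simp [σ, hτ]

open Module in
theorem aux_mem {F V I : Type*} [Field F] [AddCommGroup V] [Module F V] [LinearOrder I]
    (b : Basis I F V) {k : ℕ} {v : ExteriorAlgebra F V} (hv : v ∈ ⋀[F]^k V)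
    {s : Finset I} (hs : s.card ≠ k) : b.ExteriorAlgebra.repr v s = 0 := by
  have h1 : v ∈ Submodule.span F (b.ExteriorAlgebra '' {s | s.card = k}) := by
    rw [← exteriorPower.ιMulti_family_span_fixedDegree_of_span F b.span_eq] at hv
    refine Submodule.span_mono ?_ hv
    rintro _ ⟨s, rfl⟩
    refine ⟨s.1, s.2, ?_⟩
    rw [ExteriorAlgebra.basis_apply_powersetCard]
  rw [Basis.mem_span_image] at h1
  by_contra h
  exact hs (h1 (Finsupp.mem_support_iff.mpr h))

open Module in
theorem aux_diag {F V I : Type*} [Field F] [AddCommGroup V] [Module F V] [LinearOrder I]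
    (b : Basis I F V) (f : V →ₗ[F] V) (μ : I → F) (hf : ∀ i, f (b i) = μ i • b i)
    (v : ExteriorAlgebra F V) (s : Finset I) :
    b.ExteriorAlgebra.repr (ExteriorAlgebra.map f v) s
      = (∏ i ∈ s, μ i) * b.ExteriorAlgebra.repr v s := by
  have key : ∀ t : Finset I, ExteriorAlgebra.map f (b.ExteriorAlgebra t)
      = (∏ i ∈ t, μ i) • b.ExteriorAlgebra t := by
    intro t
    rw [ExteriorAlgebra.basis_apply_ofCard b rfl]
    unfold ExteriorAlgebra.ιMulti_family
    rw [ExteriorAlgebra.map_apply_ιMulti]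
    set o := Set.powersetCard.ofFinEmbEquiv.symm (Set.powersetCard.ofCard (rfl : t.card = t.card))
      with ho
    have h1 : f ∘ b ∘ o = fun i => μ (o i) • (b ∘ o) i := by
      funext i; simp [hf]
    rw [h1, AlternatingMap.map_smul_univ]
    congr 1
    have : t = Finset.univ.image o := by
      ext x
      have := Set.powersetCard.mem_range_ofFinEmbEquiv_symm_iff_mem
        (Set.powersetCard.ofCard (rfl : t.card = t.card)) x
      rw [← ho] at this
      simp only [Finset.mem_image, Finset.mem_univ, true_and]
      exact this.symm
    conv_rhs => rw [this]
    rw [Finset.prod_image (fun x _ y _ h => o.injective h)]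
  have h2 : (Finsupp.lapply s ∘ₗ b.ExteriorAlgebra.repr.toLinearMap ∘ₗ
      (ExteriorAlgebra.map f).toLinearMap) = (∏ i ∈ s, μ i) •
      (Finsupp.lapply s ∘ₗ b.ExteriorAlgebra.repr.toLinearMap) := by
    apply b.ExteriorAlgebra.ext
    intro t
    simp only [LinearMap.comp_apply, AlgHom.toLinearMap_apply, key, LinearEquiv.coe_coe, map_smul,
      LinearMap.smul_apply, Basis.repr_self, Finsupp.lapply_apply, smul_eq_mul]
    by_cases h : t = s
    · subst h; rfl
    · simp [h]
  exact LinearMap.congr_fun h2 v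

open Module in
theorem aux_perm {F V I : Type*} [Field F] [AddCommGroup V] [Module F V] [LinearOrder I]
    (b : Basis I F V) (f : V →ₗ[F] V) (μ : I → F) (π : Equiv.Perm I)
    (hf : ∀ i, f (b i) = μ i • b (π i))
    (v : ExteriorAlgebra F V) (s : Finset I) (hs : b.ExteriorAlgebra.repr v s = 0) :
    b.ExteriorAlgebra.repr (ExteriorAlgebra.map f v) (s.image π) = 0 := by
  have key : ∀ t : Finset I, ∃ c : F, ExteriorAlgebra.map f (b.ExteriorAlgebra t)
      = c • b.ExteriorAlgebra (t.image π) := by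
    intro t
    rw [ExteriorAlgebra.basis_apply_ofCard b (rfl : t.card = t.card)]
    unfold ExteriorAlgebra.ιMulti_family
    rw [ExteriorAlgebra.map_apply_ιMulti]
    set o := Set.powersetCard.ofFinEmbEquiv.symm (Set.powersetCard.ofCard (rfl : t.card = t.card))
      with ho
    have h1 : f ∘ b ∘ o = fun i => μ (o i) • (b ∘ (π ∘ o)) i := by
      funext i; simp [hf]
    rw [h1, AlternatingMap.map_smul_univ]
    obtain ⟨ε, hε⟩ := aux_enum b (π ∘ o) (π.injective.comp o.injective)
    have : t = Finset.univ.image o := by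
      ext x
      have := Set.powersetCard.mem_range_ofFinEmbEquiv_symm_iff_mem
        (Set.powersetCard.ofCard (rfl : t.card = t.card)) x
      rw [← ho] at this
      simp only [Finset.mem_image, Finset.mem_univ, true_and]
      exact this.symm
    have h3 : t.image π = Finset.univ.image (π ∘ o) := by
      conv_lhs => rw [this]
      rw [Finset.image_image]
    rw [hε, h3]
    refine ⟨(∏ i, μ (o i)) * ((ε : ℤ) : F), ?_⟩
    rw [mul_smul, Units.smul_def, Int.cast_smul_eq_zsmul]
  choose c hc using key
  have h2 : (Finsupp.lapply (s.image π) ∘ₗ b.ExteriorAlgebra.repr.toLinearMap ∘ₗ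
      (ExteriorAlgebra.map f).toLinearMap) = c s •
      (Finsupp.lapply s ∘ₗ b.ExteriorAlgebra.repr.toLinearMap) := by
    apply b.ExteriorAlgebra.ext
    intro t
    simp only [LinearMap.comp_apply, AlgHom.toLinearMap_apply, hc, LinearEquiv.coe_coe, map_smul,
      LinearMap.smul_apply, Basis.repr_self, Finsupp.lapply_apply, smul_eq_mul]
    by_cases h : t = s
    · subst h; simp
    · have : t.image π ≠ s.image π := fun h' => h (Finset.image_injective π.injective h')
      simp [h, this]
  have := LinearMap.congr_fun h2 v
  simp only [LinearMap.comp_apply, AlgHom.toLinearMap_apply, LinearEquiv.coe_coe,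
      LinearMap.smul_apply, Finsupp.lapply_apply, hs, smul_zero] at this
  exact this

open Module in
theorem aux_list {F V I : Type*} [Field F] [AddCommGroup V] [Module F V] [LinearOrder I]
    (b : Basis I F V) (l : List I) (hl : l.Nodup) :
    (l.map (fun i => ExteriorAlgebra.ι F (b i))).prod ≠ 0 := by
  obtain ⟨ε, hε⟩ := aux_enum b l.get (List.nodup_iff_injective_get.mp hl)
  rw [ExteriorAlgebra.ιMulti_apply] at hε
  have : (List.ofFn fun i => ExteriorAlgebra.ι F ((b ∘ l.get) i))
      = l.map (fun i => ExteriorAlgebra.ι F (b i)) := by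
    conv_rhs => rw [← List.ofFn_get l, List.map_ofFn]
    rfl
  rw [this] at hε
  rw [hε]
  intro h
  exact b.ExteriorAlgebra.ne_zero _ ((smul_eq_zero_iff_eq ε).mp h)

/-- Coordinates for an unordered index type. -/
theorem aux_coords {F V I : Type*} [Field F] [AddCommGroup V] [Module F V] [DecidableEq I]
    (b : Module.Basis I F V) :
    ∃ c : Finset I → ExteriorAlgebra F V →ₗ[F] F,
      (∀ k : ℕ, ∀ v ∈ ⋀[F]^k V, (∀ s : Finset I, s.card = k → c s v = 0) → v = 0) ∧
      (∀ (f : V →ₗ[F] V) (μ : I → F), (∀ i, f (b i) = μ i • b i) → ∀ v s,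
        c s (ExteriorAlgebra.map f v) = (∏ i ∈ s, μ i) * c s v) ∧
      (∀ (f : V →ₗ[F] V) (μ : I → F) (π : Equiv.Perm I), (∀ i, f (b i) = μ i • b (π i)) →
        ∀ v s, c s v = 0 → c (s.image π) (ExteriorAlgebra.map f v) = 0) ∧
      (∀ l : List I, l.Nodup → (l.map (fun i => ExteriorAlgebra.ι F (b i))).prod ≠ 0) := by
  let _ : LinearOrder I := IsWellOrder.linearOrder WellOrderingRel
  refine ⟨fun s => b.ExteriorAlgebra.coord s, ?_, ?_, ?_, ?_⟩
  · intro k v hv h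
    apply b.ExteriorAlgebra.repr.injective
    rw [map_zero]
    ext s
    by_cases hs : s.card = k
    · exact h s hs
    · exact aux_mem b hv hs
  · intro f μ hf v s
    exact aux_diag b f μ hf v s
  · intro f μ π hf v s hs
    show b.ExteriorAlgebra.repr _ _ = 0
    convert aux_perm b f μ π hf v s hs
  · exact fun l hl => aux_list b l hl

theorem aux_diag_equiv {F W : Type*} [Field F] [AddCommGroup W] [Module F W] {m : ℕ}
    (B : Module.Basis (Fin m) F W) (lam : Fin m → F) (hl : ∀ i, lam i ≠ 0) :
    ∃ g : W ≃ₗ[F] W, (∀ i, g (B i) = lam i • B i) ∧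
      LinearMap.det (g : W →ₗ[F] W) = ∏ i, lam i := by
  have := Module.Finite.of_basis B
  let f : W →ₗ[F] W := Matrix.toLin B B (Matrix.diagonal lam)
  have hd : LinearMap.det f = ∏ i, lam i := by
    simp [f, LinearMap.det_toLin, Matrix.det_diagonal]
  have hu : IsUnit (LinearMap.det f) := by
    rw [hd]; exact (Finset.prod_ne_zero_iff.mpr fun i _ => hl i).isUnit
  refine ⟨LinearMap.equivOfDetNeZero f hu.ne_zero, ?_, ?_⟩
  · intro i
    show f (B i) = _
    simp [f, Matrix.toLin_self, Matrix.diagonal_apply]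
  · rw [← hd]; rfl

theorem aux_perm_equiv {F W : Type*} [Field F] [AddCommGroup W] [Module F W] {m : ℕ}
    (hm : 0 < m) (B : Module.Basis (Fin m) F W) (σ : Equiv.Perm (Fin m)) :
    ∃ (g : W ≃ₗ[F] W) (lam : Fin m → F), (∀ i, lam i ≠ 0) ∧
      (∀ i, g (B i) = lam i • B (σ i)) ∧ LinearMap.det (g : W →ₗ[F] W) = 1 := by
  let g0 : W ≃ₗ[F] W := B.equiv B σ
  have h0 : LinearMap.det (g0 : W →ₗ[F] W) ≠ 0 := (LinearEquiv.isUnit_det' g0).ne_zero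
  let lam : Fin m → F := fun i => if i = ⟨0, hm⟩ then (LinearMap.det (g0 : W →ₗ[F] W))⁻¹ else 1
  have hl : ∀ i, lam i ≠ 0 := by
    intro i
    simp only [lam]
    split_ifs
    · exact inv_ne_zero h0
    · exact one_ne_zero
  obtain ⟨D, hD, hdet⟩ := aux_diag_equiv B lam hl
  refine ⟨D.trans g0, lam, hl, ?_, ?_⟩
  · intro i
    simp [hD, g0]
  · rw [LinearEquiv.coe_trans, LinearMap.det_comp, hdet]
    simp [lam, h0]

/-- The action of `g` on `W ⊕ W*`. -/
noncomputable abbrev slAct {F W : Type*} [Field F] [AddCommGroup W] [Module F W]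
    (g : W ≃ₗ[F] W) : (W × Module.Dual F W) →ₗ[F] (W × Module.Dual F W) :=
  LinearMap.prodMap (g : W →ₗ[F] W) (LinearMap.dualMap (g.symm : W →ₗ[F] W))

theorem aux_act {F W : Type*} [Field F] [AddCommGroup W] [Module F W] {m : ℕ}
    (B : Module.Basis (Fin m) F W) (σ : Equiv.Perm (Fin m)) (g : W ≃ₗ[F] W) (lam : Fin m → F)
    (hl : ∀ i, lam i ≠ 0) (hg : ∀ i, g (B i) = lam i • B (σ i)) (x : Fin m ⊕ Fin m) :
    slAct g (B.prod B.dualBasis x) = Sum.elim lam (fun i => (lam i)⁻¹) x •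
      B.prod B.dualBasis (Equiv.sumCongr σ σ x) := by
  rcases x with i | i
  · simp [slAct, hg, Module.Basis.prod_apply]
  · simp only [slAct, Module.Basis.prod_apply, Sum.elim_inr, Function.comp_apply, LinearMap.coe_inr,
      LinearMap.prodMap_apply, map_zero, Equiv.sumCongr_apply, Sum.map_inr, Prod.smul_mk, smul_zero]
    congr 1
    apply B.ext
    intro j
    obtain ⟨j, rfl⟩ := σ.surjective j
    have : g.symm (B (σ j)) = (lam j)⁻¹ • B j := by
      rw [LinearEquiv.symm_apply_eq, map_smul, hg, smul_smul, inv_mul_cancel₀ (hl j), one_smul]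
    simp only [LinearMap.dualMap_apply, LinearEquiv.coe_coe, this, map_smul,
      Module.Basis.dualBasis_apply_self, LinearMap.smul_apply, EmbeddingLike.apply_eq_iff_eq]
    by_cases h : j = i
    · subst h; rfl
    · simp [h]

theorem mem_slInv {F W : Type*} [Field F] [AddCommGroup W] [Module F W] {k : ℕ}
    {v : ExteriorAlgebra F (W × Module.Dual F W)} :
    v ∈ slInvariants F W k ↔ v ∈ (⋀[F]^k (W × Module.Dual F W)) ∧
      ∀ g : W ≃ₗ[F] W, LinearMap.det (g : W →ₗ[F] W) = 1 →
        ExteriorAlgebra.map (slAct g) v = v := by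
  simp [slInvariants, Submodule.mem_iInf, sub_eq_zero]

/-- The possible weights. -/
theorem aux_support {F W : Type*} [Field F] [CharZero F] [AddCommGroup W] [Module F W] {m : ℕ}
    (B : Module.Basis (Fin m) F W)
    (c : Finset (Fin m ⊕ Fin m) → ExteriorAlgebra F (W × Module.Dual F W) →ₗ[F] F)
    (hc : ∀ (f : (W × Module.Dual F W) →ₗ[F] (W × Module.Dual F W)) (μ : Fin m ⊕ Fin m → F),
      (∀ i, f (B.prod B.dualBasis i) = μ i • B.prod B.dualBasis i) → ∀ v s,
        c s (ExteriorAlgebra.map f v) = (∏ i ∈ s, μ i) * c s v)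
    {k : ℕ} {v : ExteriorAlgebra F (W × Module.Dual F W)} (hv : v ∈ slInvariants F W k)
    (s : Finset (Fin m ⊕ Fin m)) (hs : c s v ≠ 0) :
    (∀ i, Sum.inl i ∈ s ↔ Sum.inr i ∈ s) ∨ (∀ i, Sum.inl i ∈ s ∧ Sum.inr i ∉ s) ∨
      (∀ i, Sum.inl i ∉ s ∧ Sum.inr i ∈ s) := by
  have key : ∀ i j : Fin m, i ≠ j →
      ((Sum.inl i ∈ s ↔ Sum.inr i ∈ s) ∧ (Sum.inl j ∈ s ↔ Sum.inr j ∈ s)) ∨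
      ((Sum.inl i ∈ s ∧ Sum.inr i ∉ s) ∧ (Sum.inl j ∈ s ∧ Sum.inr j ∉ s)) ∨
      ((Sum.inl i ∉ s ∧ Sum.inr i ∈ s) ∧ (Sum.inl j ∉ s ∧ Sum.inr j ∈ s)) := by
    intro i j hij
    let lam : Fin m → F := fun x => if x = i then 2 else if x = j then 2⁻¹ else 1
    have hi : lam i = 2 := by simp [lam]
    have hj : lam j = 2⁻¹ := by simp [lam, hij.symm]
    have ho : ∀ x, x ≠ i ∧ x ≠ j → lam x = 1 := by
      rintro x ⟨h1, h2⟩; simp [lam, h1, h2]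
    have hl : ∀ x, lam x ≠ 0 := by
      intro x
      simp only [lam]
      split_ifs <;> simp
    obtain ⟨g, hg, hdet⟩ := aux_diag_equiv B lam hl
    have hdet1 : LinearMap.det (g : W →ₗ[F] W) = 1 := by
      rw [hdet, Fintype.prod_eq_mul i j hij ho, hi, hj]; simp
    have h1 := hc (slAct g) _ (fun x => by simpa using aux_act B 1 g lam hl hg x) v s
    rw [(mem_slInv.mp hv).2 g hdet1] at h1
    have h2 : (∏ x ∈ s, Sum.elim lam (fun i => (lam i)⁻¹) x) = 1 := by
      have : (∏ x ∈ s, Sum.elim lam (fun i => (lam i)⁻¹) x) * c s v = 1 * c s v := by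
        rw [← h1, one_mul]
      exact mul_right_cancel₀ hs this
    have h3 : (∏ x ∈ s, Sum.elim lam (fun i => (lam i)⁻¹) x)
        = ∏ x : Fin m, ((if Sum.inl x ∈ s then lam x else 1) *
            (if Sum.inr x ∈ s then (lam x)⁻¹ else 1)) := by
      rw [← Fintype.prod_ite_mem, Fintype.prod_sum_type, Finset.prod_mul_distrib]
      rfl
    rw [h3, Fintype.prod_eq_mul i j hij (by intro x hx; simp [ho x hx]), hi, hj] at h2
    by_cases a1 : Sum.inl i ∈ s <;> by_cases a2 : Sum.inr i ∈ s <;>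
      by_cases a3 : Sum.inl j ∈ s <;> by_cases a4 : Sum.inr j ∈ s <;>
      simp [a1, a2, a3, a4] at h2 ⊢ <;> norm_num at h2
  by_cases hm : m = 0
  · subst hm
    left; intro i; exact i.elim0
  · let i0 : Fin m := ⟨0, Nat.pos_of_ne_zero hm⟩
    by_cases h1 : (Sum.inl i0 ∈ s ↔ Sum.inr i0 ∈ s)
    · left
      intro j
      by_cases hj : j = i0
      · subst hj; exact h1
      · have := key i0 j (Ne.symm hj)
        tauto
    · by_cases h2 : Sum.inl i0 ∈ s
      · right; left
        intro j
        by_cases hj : j = i0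
        · subst hj; tauto
        · have := key i0 j (Ne.symm hj)
          tauto
      · right; right
        intro j
        by_cases hj : j = i0
        · subst hj; tauto
        · have := key i0 j (Ne.symm hj)
          tauto

theorem aux_exists_perm {m : ℕ} (S T : Finset (Fin m)) (h : S.card = T.card) :
    ∃ σ : Equiv.Perm (Fin m), S.image σ = T := by
  let e : {x // x ∈ S} ≃ {x // x ∈ T} := Finset.equivOfCardEq h
  refine ⟨e.extendSubtype, ?_⟩
  apply Finset.eq_of_subset_of_card_le
  · intro x hx
    obtain ⟨y, hy, rfl⟩ := Finset.mem_image.mp hx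
    exact e.extendSubtype_mem y hy
  · rw [Finset.card_image_of_injective _ (Equiv.injective _), h]

theorem aux_inj {F W : Type*} [Field F] [CharZero F] [AddCommGroup W] [Module F W] {m : ℕ}
    (hm : 0 < m) (B : Module.Basis (Fin m) F W)
    (c : Finset (Fin m ⊕ Fin m) → ExteriorAlgebra F (W × Module.Dual F W) →ₗ[F] F)
    (hc0 : ∀ k : ℕ, ∀ v ∈ ⋀[F]^k (W × Module.Dual F W),
      (∀ s : Finset (Fin m ⊕ Fin m), s.card = k → c s v = 0) → v = 0)
    (hc : ∀ (f : (W × Module.Dual F W) →ₗ[F] (W × Module.Dual F W)) (μ : Fin m ⊕ Fin m → F),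
      (∀ i, f (B.prod B.dualBasis i) = μ i • B.prod B.dualBasis i) → ∀ v s,
        c s (ExteriorAlgebra.map f v) = (∏ i ∈ s, μ i) * c s v)
    (hp : ∀ (f : (W × Module.Dual F W) →ₗ[F] (W × Module.Dual F W)) (μ : Fin m ⊕ Fin m → F)
      (π : Equiv.Perm (Fin m ⊕ Fin m)),
      (∀ i, f (B.prod B.dualBasis i) = μ i • B.prod B.dualBasis (π i)) →
        ∀ v s, c s v = 0 → c (s.image π) (ExteriorAlgebra.map f v) = 0)
    {k : ℕ} {v : ExteriorAlgebra F (W × Module.Dual F W)} (hv : v ∈ slInvariants F W k)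
    (h1 : ∀ p, k = 2 * p → ∃ T : Finset (Fin m), T.card = p ∧ c (T.disjSum T) v = 0)
    (h2 : k = m → c (Finset.univ.disjSum ∅) v = 0 ∧ c (Finset.disjSum ∅ Finset.univ) v = 0) :
    v = 0 := by
  apply hc0 k v (mem_slInv.mp hv).1
  intro s hs
  by_contra hne
  have hcard := Finset.card_toLeft_add_card_toRight (u := s)
  rcases aux_support B c hc hv s hne with h | h | h
  · have hLR : s.toLeft = s.toRight := by
      ext i; simp [h i]
    have hsL : s = s.toLeft.disjSum s.toLeft := by
      ext x
      rcases x with i | i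
      · simp
      · simp [h i]
    obtain ⟨T, hT, hcT⟩ := h1 s.toLeft.card (by rw [← hLR] at hcard; omega)
    obtain ⟨σ, hσ⟩ := aux_exists_perm T s.toLeft hT
    obtain ⟨g, lam, hl, hg, hdet⟩ := aux_perm_equiv hm B σ
    have := hp (slAct g) _ (Equiv.sumCongr σ σ) (aux_act B σ g lam hl hg) v _ hcT
    rw [(mem_slInv.mp hv).2 g hdet] at this
    apply hne
    rw [hsL]
    have e : s.toLeft.disjSum s.toLeft = (T.disjSum T).image (Equiv.sumCongr σ σ) := by
      rw [← hσ]
      ext x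
      rcases x with i | i <;> simp
    rw [e]
    exact this
  · have : s = Finset.univ.disjSum ∅ := by
      ext x
      rcases x with i | i <;> simp [h i]
    subst this
    exact hne (h2 (by rw [← hs]; simp)).1
  · have : s = Finset.disjSum ∅ Finset.univ := by
      ext x
      rcases x with i | i <;> simp [h i]
    subst this
    exact hne (h2 (by rw [← hs]; simp)).2

/-- The canonical degree two invariant. -/
noncomputable def slOmega {F W : Type*} [Field F] [AddCommGroup W] [Module F W] {m : ℕ}
    (B : Module.Basis (Fin m) F W) : ExteriorAlgebra F (W × Module.Dual F W) :=
  ∑ i, ExteriorAlgebra.ι F (B i, 0) * ExteriorAlgebra.ι F (0, B.dualBasis i)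

theorem aux_omega_inv {F W : Type*} [Field F] [AddCommGroup W] [Module F W] {m : ℕ}
    (B : Module.Basis (Fin m) F W) (g : W ≃ₗ[F] W) :
    ExteriorAlgebra.map (slAct g) (slOmega B) = slOmega B := by
  have e1 : ∀ i, g (B i) = ∑ j, B.repr (g (B i)) j • B j := fun i => (B.sum_repr _).symm
  have e2 : ∀ j, ∑ i, B.repr (g (B i)) j • (B.dualBasis i ∘ₗ (g.symm : W →ₗ[F] W))
      = B.dualBasis j := by
    intro j
    apply LinearMap.ext
    intro w
    have : g (∑ i, B.repr (g.symm w) i • B i) = w := by rw [B.sum_repr]; simp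
    have h' : B.repr w j = B.repr (g (∑ i, B.repr (g.symm w) i • B i)) j := by rw [this]
    rw [map_sum, map_sum, Finsupp.finsetSum_apply] at h'
    simp [h', mul_comm]
  let P : W →ₗ[F] ExteriorAlgebra F (W × Module.Dual F W) :=
    ExteriorAlgebra.ι F ∘ₗ LinearMap.inl F W (Module.Dual F W)
  let Q : Module.Dual F W →ₗ[F] ExteriorAlgebra F (W × Module.Dual F W) :=
    ExteriorAlgebra.ι F ∘ₗ LinearMap.inr F W (Module.Dual F W)
  have h0 : slOmega B = ∑ i, P (B i) * Q (B.dualBasis i) := rfl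
  have h1 : ExteriorAlgebra.map (slAct g) (slOmega B) =
      ∑ i, P (g (B i)) * Q (B.dualBasis i ∘ₗ (g.symm : W →ₗ[F] W)) := by
    simp only [slOmega, map_sum, map_mul, ExteriorAlgebra.map_apply_ι, P, Q]
    refine Finset.sum_congr rfl fun i _ => ?_
    simp [LinearMap.dualMap]
    rfl
  rw [h1, h0]
  calc _ = ∑ i, ∑ j, P (B j) * Q (B.repr (g (B i)) j • (B.dualBasis i ∘ₗ (g.symm : W →ₗ[F] W))) := by
        refine Finset.sum_congr rfl fun i _ => ?_
        conv_lhs => rw [e1 i]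
        rw [map_sum, Finset.sum_mul]
        refine Finset.sum_congr rfl fun j _ => ?_
        rw [map_smul, map_smul, smul_mul_assoc, mul_smul_comm]
    _ = _ := by
        rw [Finset.sum_comm]
        refine Finset.sum_congr rfl fun j _ => ?_
        rw [← Finset.mul_sum, ← map_sum, e2]

theorem aux_omega_mem {F W : Type*} [Field F] [AddCommGroup W] [Module F W] {m : ℕ}
    (B : Module.Basis (Fin m) F W) (p : ℕ) : slOmega B ^ p ∈ slInvariants F W (2 * p) := by
  rw [mem_slInv]
  constructor
  · show _ ∈ (LinearMap.range (ExteriorAlgebra.ι F) : Submodule F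
      (ExteriorAlgebra F (W × Module.Dual F W))) ^ (2 * p)
    rw [pow_mul]
    apply Submodule.pow_mem_pow
    rw [pow_two]
    exact Submodule.sum_mem _ fun i _ => Submodule.mul_mem_mul ⟨_, rfl⟩ ⟨_, rfl⟩
  · intro g _
    rw [map_pow, aux_omega_inv]

theorem aux_pow_list {A : Type*} [Ring A] {ι : Type*} (x : ι → A)
    (hx : ∀ i, x i * x i = 0) (hcomm : ∀ i j, Commute (x i) (x j)) (l : List ι) :
    ((l.map x).sum) ^ l.length = (l.length.factorial : A) * (l.map x).prod ∧
    ((l.map x).sum) ^ (l.length + 1) = 0 := by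
  induction l with
  | nil => simp
  | cons a l ih =>
    obtain ⟨ih1, ih2⟩ := ih
    set X := (l.map x).sum with hX
    have hcX : Commute (x a) X := by
      rw [hX]
      apply Commute.list_sum_right
      intro y hy
      obtain ⟨j, _, rfl⟩ := List.mem_map.mp hy
      exact hcomm a j
    have hpow : ∀ r : ℕ, (x a + X) ^ (r + 1) = X ^ (r + 1) + ((r + 1 : ℕ) : A) * (x a * X ^ r) := by
      intro r
      induction r with
      | zero => simp [add_comm]
      | succ r ihr =>
        have hc1 : X * x a = x a * X := hcX.eq.symm
        have hz : x a * X ^ r * x a = 0 := by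
          rw [mul_assoc, ← (hcX.pow_right r).eq, ← mul_assoc, hx, zero_mul]
        have hc2 : X ^ (r + 1) * x a = x a * X ^ (r + 1) := (hcX.pow_right (r + 1)).eq.symm
        rw [pow_succ, ihr, mul_add, add_mul, add_mul, hc2, mul_assoc _ (x a * X ^ r) (x a), hz,
          mul_zero, add_zero, ← pow_succ, mul_assoc, mul_assoc (x a), ← pow_succ]
        push_cast
        noncomm_ring
    simp only [List.map_cons, List.sum_cons, List.prod_cons, List.length_cons]
    rw [← hX]
    constructor
    · rw [hpow, ih2, zero_add, ih1, Nat.factorial_succ]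
      push_cast
      rw [mul_assoc, ← mul_assoc (x a), (Nat.cast_commute _ (x a)).eq.symm, mul_assoc]
    · rw [hpow, pow_succ, ih2]
      simp

theorem aux_omega_ne {F W : Type*} [Field F] [CharZero F] [AddCommGroup W] [Module F W] {m : ℕ}
    (B : Module.Basis (Fin m) F W)
    (hl : ∀ l : List (Fin m ⊕ Fin m), l.Nodup →
      (l.map (fun i => ExteriorAlgebra.ι F (B.prod B.dualBasis i))).prod ≠ 0) (p : ℕ)
    (hp : p ≤ m) : slOmega B ^ p ≠ 0 := by
  let P : Fin m → ExteriorAlgebra F (W × Module.Dual F W) := fun i => ExteriorAlgebra.ι F (B i, 0)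
  let Q : Fin m → ExteriorAlgebra F (W × Module.Dual F W) :=
    fun i => ExteriorAlgebra.ι F (0, B.dualBasis i)
  have anti : ∀ u v : W × Module.Dual F W, ExteriorAlgebra.ι F u * ExteriorAlgebra.ι F v
      = - (ExteriorAlgebra.ι F v * ExteriorAlgebra.ι F u) := fun u v =>
    eq_neg_of_add_eq_zero_left (ExteriorAlgebra.ι_add_mul_swap u v)
  have comm2 : ∀ u v w : W × Module.Dual F W,
      Commute (ExteriorAlgebra.ι F u) (ExteriorAlgebra.ι F v * ExteriorAlgebra.ι F w) := by
    intro u v w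
    show _ = _
    rw [← mul_assoc, anti u v, neg_mul, mul_assoc, anti u w, mul_neg, neg_neg, mul_assoc]
  have hcomm : ∀ i j, Commute (P i * Q i) (P j * Q j) := fun i j =>
    (comm2 _ _ _).mul_left (comm2 _ _ _)
  have hsq : ∀ i, (P i * Q i) * (P i * Q i) = 0 := by
    intro i
    rw [mul_assoc, (comm2 (0, B.dualBasis i) (B i, 0) (0, B.dualBasis i)).eq, mul_assoc]
    simp
  have hpow := (aux_pow_list (fun i => P i * Q i) hsq hcomm (List.finRange m)).1
  rw [List.length_finRange] at hpow
  have hsum : ((List.finRange m).map fun i => P i * Q i).sum = slOmega B := by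
    rw [← List.ofFn_eq_map, List.sum_ofFn]; rfl
  rw [hsum] at hpow
  have hflat : ∀ l : List (Fin m), (l.map fun i => P i * Q i).prod =
      ((l.flatMap fun i => [Sum.inl i, Sum.inr i]).map
        (fun i => ExteriorAlgebra.ι F (B.prod B.dualBasis i))).prod := by
    intro l
    induction l with
    | nil => rfl
    | cons a l ih =>
      simp only [List.map_cons, List.prod_cons, ih, List.flatMap_cons, List.map_append,
        List.prod_append, List.map_nil, List.prod_nil, mul_one, P, Q]
      simp [Module.Basis.prod_apply]
  have hnz : ((List.finRange m).map fun i => P i * Q i).prod ≠ 0 := by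
    rw [hflat]
    apply hl
    rw [List.nodup_flatMap]
    refine ⟨fun x _ => by simp, ?_⟩
    refine (List.nodup_finRange m).imp ?_
    intro a b hab
    simp [Function.onFun, hab.symm]
  intro h0
  have : slOmega B ^ m = 0 := by
    obtain ⟨d, hd⟩ := Nat.exists_eq_add_of_le hp
    have h' : slOmega B ^ (p + d) = 0 := by rw [pow_add, h0, zero_mul]
    exact hd ▸ h'
  rw [this] at hpow
  have hf : ((m.factorial : F)) • ((List.finRange m).map fun i => P i * Q i).prod = 0 := by
    rw [Algebra.smul_def, map_natCast]; exact hpow.symm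
  rcases smul_eq_zero.mp hf with h | h
  · exact Nat.factorial_ne_zero m (by exact_mod_cast h)
  · exact hnz h

theorem aux_alt_det {F U E : Type*} [Field F] [AddCommGroup U] [Module F U] [AddCommGroup E]
    [Module F E] {m : ℕ} (B : Module.Basis (Fin m) F U) (A : U [⋀^Fin m]→ₗ[F] E)
    (g : U →ₗ[F] U) : A (g ∘ B) = LinearMap.det g • A B := by
  have h : A = (LinearMap.toSpanSingleton F E (A B)).compAlternatingMap B.det := by
    apply B.ext_alternating
    intro v hv
    let σ : Equiv.Perm (Fin m) := Equiv.ofBijective v (Finite.injective_iff_bijective.mp hv)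
    have : (fun i => B (v i)) = B ∘ σ := rfl
    rw [this, AlternatingMap.map_perm, AlternatingMap.map_perm]
    congr 1
    simp [B.det_self]
  have h1 : B.det (g ∘ B) = LinearMap.det g := by
    rw [B.det_comp, B.det_self, mul_one]
  conv_lhs => rw [h]
  simp [h1]

theorem aux_top_inv {F U V : Type*} [Field F] [AddCommGroup U] [Module F U] [AddCommGroup V]
    [Module F V] {m : ℕ} (B : Module.Basis (Fin m) F U) (j : U →ₗ[F] V) (f : V →ₗ[F] V)
    (g : U →ₗ[F] U) (hfg : f ∘ₗ j = j ∘ₗ g) :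
    ExteriorAlgebra.map f (ExteriorAlgebra.ιMulti F m (j ∘ B))
      = LinearMap.det g • ExteriorAlgebra.ιMulti F m (j ∘ B) := by
  have := aux_alt_det B ((ExteriorAlgebra.ιMulti F m).compLinearMap j) g
  rw [ExteriorAlgebra.map_apply_ιMulti]
  have e : f ∘ j ∘ B = j ∘ g ∘ B := by
    funext i
    exact LinearMap.congr_fun hfg (B i)
  rw [e]
  exact this

theorem aux_three {F : Type*} [Field F] [CharZero F] {n : ℕ} (hn : 1 ≤ n) :
    Function.Injective (![2 ^ n, 2 ^ (2 * n), 1] : Fin 3 → F) := by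
  have a0 : ∀ a b : ℕ, (2 : F) ^ a = 2 ^ b → a = b := by
    intro a b h
    have : (2 : ℕ) ^ a = 2 ^ b := by exact_mod_cast h
    exact Nat.pow_right_injective le_rfl this
  have a1 : (2 : F) ^ n ≠ 2 ^ (2 * n) := fun h => by have := a0 _ _ h; omega
  have a2 : (2 : F) ^ n ≠ 1 := fun h => by have := a0 n 0 (by simpa using h); omega
  have a3 : (2 : F) ^ (2 * n) ≠ 1 := fun h => by
    have := a0 (2 * n) 0 (by simpa using h); omega
  intro i j hij
  fin_cases i <;> fin_cases j <;> simp [a1, a2, a3, a1.symm, a2.symm, a3.symm] at hij ⊢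

theorem aux_lower {F W : Type*} [Field F] [CharZero F] [AddCommGroup W] [Module F W] {n : ℕ}
    (hn : 1 ≤ n) (B : Module.Basis (Fin (2 * n)) F W)
    (hl : ∀ l : List (Fin (2 * n) ⊕ Fin (2 * n)), l.Nodup →
      (l.map (fun i => ExteriorAlgebra.ι F (B.prod B.dualBasis i))).prod ≠ 0) :
    ∃ u : Fin 3 → slInvariants F W (2 * n), LinearIndependent F u := by
  have hfin := Module.Finite.of_basis B
  have hdim : Module.finrank F W = 2 * n := by
    rw [Module.finrank_eq_card_basis B]; simp
  set et := ExteriorAlgebra.ιMulti F (2 * n) (LinearMap.inl F W (Module.Dual F W) ∘ B) with het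
  set ft := ExteriorAlgebra.ιMulti F (2 * n)
    (LinearMap.inr F W (Module.Dual F W) ∘ B.dualBasis) with hft
  have het0 : et ≠ 0 := by
    have := hl ((List.finRange (2 * n)).map Sum.inl)
      ((List.nodup_finRange _).map Sum.inl_injective)
    rw [het, ExteriorAlgebra.ιMulti_apply, List.ofFn_eq_map]
    rw [List.map_map] at this
    convert this using 3
    funext i
    simp
  have hft0 : ft ≠ 0 := by
    have := hl ((List.finRange (2 * n)).map Sum.inr)
      ((List.nodup_finRange _).map Sum.inr_injective)
    rw [hft, ExteriorAlgebra.ιMulti_apply, List.ofFn_eq_map]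
    rw [List.map_map] at this
    convert this using 3
    funext i
    simp
  have hω0 := aux_omega_ne B hl n (by omega)
  have hωm := aux_omega_mem B n
  have hetm : et ∈ slInvariants F W (2 * n) := by
    refine mem_slInv.mpr ⟨(exteriorPower.ιMulti F (2 * n) _).2, fun g hg => ?_⟩
    rw [het, aux_top_inv B _ (slAct g) (g : W →ₗ[F] W) (by ext <;> simp), hg, one_smul]
  have hftm : ft ∈ slInvariants F W (2 * n) := by
    refine mem_slInv.mpr ⟨(exteriorPower.ιMulti F (2 * n) _).2, fun g hg => ?_⟩
    have hd : LinearMap.det (LinearMap.dualMap (g.symm : W →ₗ[F] W)) = 1 := by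
      rw [LinearMap.det_dualMap]
      have := LinearEquiv.det_mul_det_symm g
      rw [hg, one_mul] at this
      exact this
    rw [hft, aux_top_inv B.dualBasis _ (slAct g) (LinearMap.dualMap (g.symm : W →ₗ[F] W))
      (by ext <;> simp), hd, one_smul]
  let θ : (W × Module.Dual F W) →ₗ[F] (W × Module.Dual F W) :=
    LinearMap.prodMap ((2 : F) • LinearMap.id) LinearMap.id
  let Θ : Module.End F (ExteriorAlgebra F (W × Module.Dual F W)) :=
    (ExteriorAlgebra.map θ).toLinearMap
  have h1 : Θ et = (2 : F) ^ (2 * n) • et := by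
    have := aux_top_inv B (LinearMap.inl F W (Module.Dual F W)) θ ((2 : F) • LinearMap.id)
      (by ext <;> simp [θ])
    rw [LinearMap.det_smul, LinearMap.det_id, mul_one, hdim] at this
    exact this
  have h2 : Θ ft = (1 : F) • ft := by
    have := aux_top_inv B.dualBasis (LinearMap.inr F W (Module.Dual F W)) θ LinearMap.id
      (by ext <;> simp [θ])
    rw [LinearMap.det_id] at this
    exact this
  have h3 : Θ (slOmega B ^ n) = (2 : F) ^ n • slOmega B ^ n := by
    have : ExteriorAlgebra.map θ (slOmega B) = (2 : F) • slOmega B := by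
      simp only [slOmega, map_sum, map_mul, ExteriorAlgebra.map_apply_ι, Finset.smul_sum]
      refine Finset.sum_congr rfl fun i _ => ?_
      rw [← smul_mul_assoc, ← map_smul]
      simp [θ]
    show ExteriorAlgebra.map θ (slOmega B ^ n) = _
    rw [map_pow, this, smul_pow]
  have hinj : Function.Injective (![2 ^ n, 2 ^ (2 * n), 1] : Fin 3 → F) := aux_three hn
  have hli := Module.End.eigenvectors_linearIndependent' Θ _ hinj ![slOmega B ^ n, et, ft] (by
    intro i
    fin_cases i
    · exact ⟨Module.End.mem_eigenspace_iff.mpr h3, hω0⟩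
    · exact ⟨Module.End.mem_eigenspace_iff.mpr h1, het0⟩
    · exact ⟨Module.End.mem_eigenspace_iff.mpr h2, hft0⟩)
  refine ⟨![⟨_, hωm⟩, ⟨_, hetm⟩, ⟨_, hftm⟩], ?_⟩
  apply LinearIndependent.of_comp (slInvariants F W (2 * n)).subtype
  have e : (slInvariants F W (2 * n)).subtype ∘ ![⟨_, hωm⟩, ⟨_, hetm⟩, ⟨_, hftm⟩]
      = ![slOmega B ^ n, et, ft] := by
    funext i
    fin_cases i <;> rfl
  rw [e]
  exact hli


/-- For a `2n`-dimensional vector space `W` over a field `F` of characteristic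
zero, the space of `SL(W)`-invariants in `⋀^k (W ⊕ W*)` has dimension `0` for odd `k`,
dimension `1` for even `k ≤ 4n` with `k ≠ 2n`, and dimension `3` for `k = 2n`. -/
theorem stmt_2 (F : Type*) [Field F] [CharZero F]
    (W : Type*) [AddCommGroup W] [Module F W] [FiniteDimensional F W]
    (n : ℕ) (hn : 1 ≤ n) (hW : Module.finrank F W = 2 * n) (k : ℕ) :
    (Odd k → Module.finrank F ↥(slInvariants F W k) = 0) ∧
    (Even k → k ≤ 4 * n → k ≠ 2 * n → Module.finrank F ↥(slInvariants F W k) = 1) ∧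
    (k = 2 * n → Module.finrank F ↥(slInvariants F W k) = 3) := by
  have hm : 0 < 2 * n := by omega
  let B : Module.Basis (Fin (2 * n)) F W := Module.finBasisOfFinrankEq F W hW
  obtain ⟨c, hc0, hc, hp, hl⟩ := aux_coords (B.prod B.dualBasis)
  refine ⟨?_, ?_, ?_⟩
  · intro hk
    have : slInvariants F W k = ⊥ := by
      rw [eq_bot_iff]
      intro v hv
      refine (Submodule.mem_bot F).mpr (aux_inj hm B c hc0 hc hp hv ?_ ?_)
      · intro p hkp
        obtain ⟨q, hq⟩ := hk
        omega
      · intro hkm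
        obtain ⟨q, hq⟩ := hk
        omega
    rw [this]
    simp
  · rintro ⟨p, hk⟩ hk4 hk2
    obtain rfl : k = 2 * p := by omega
    obtain ⟨T, -, hT⟩ := Finset.exists_subset_card_eq
      (s := (Finset.univ : Finset (Fin (2 * n)))) (n := p) (by simp; omega)
    let L : slInvariants F W (2 * p) →ₗ[F] F :=
      c (T.disjSum T) ∘ₗ (slInvariants F W (2 * p)).subtype
    have hL : Function.Injective L := by
      rw [← LinearMap.ker_eq_bot, LinearMap.ker_eq_bot']
      rintro ⟨v, hv⟩ h
      refine Subtype.ext (aux_inj hm B c hc0 hc hp hv ?_ ?_)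
      · intro q hq
        exact ⟨T, by omega, h⟩
      · intro h'
        exact absurd h' hk2
    have hfin : Module.Finite F (slInvariants F W (2 * p)) := Module.Finite.of_injective L hL
    apply le_antisymm
    · simpa using LinearMap.finrank_le_finrank_of_injective hL
    · rw [Nat.one_le_iff_ne_zero, ← Nat.pos_iff_ne_zero, Module.finrank_pos_iff]
      refine ⟨⟨⟨_, aux_omega_mem B p⟩, 0, fun h => ?_⟩⟩
      exact aux_omega_ne B hl p (by omega) (congrArg Subtype.val h)
  · rintro rfl
    obtain ⟨T, -, hT⟩ := Finset.exists_subset_card_eq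
      (s := (Finset.univ : Finset (Fin (2 * n)))) (n := n) (by simp; omega)
    let L : slInvariants F W (2 * n) →ₗ[F] (F × F × F) :=
      ((c (T.disjSum T)).prod ((c (Finset.univ.disjSum ∅)).prod
        (c (Finset.disjSum ∅ Finset.univ)))) ∘ₗ (slInvariants F W (2 * n)).subtype
    have hL : Function.Injective L := by
      rw [← LinearMap.ker_eq_bot, LinearMap.ker_eq_bot']
      rintro ⟨v, hv⟩ h
      have h1 : c (T.disjSum T) v = 0 := congrArg Prod.fst h
      have h2 : c (Finset.univ.disjSum ∅) v = 0 := congrArg (fun x => x.2.1) h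
      have h3 : c (Finset.disjSum ∅ Finset.univ) v = 0 := congrArg (fun x => x.2.2) h
      refine Subtype.ext (aux_inj hm B c hc0 hc hp hv ?_ ?_)
      · intro q hq
        exact ⟨T, by omega, h1⟩
      · intro _
        exact ⟨h2, h3⟩
    have hfin : Module.Finite F (slInvariants F W (2 * n)) := Module.Finite.of_injective L hL
    apply le_antisymm
    · simpa using LinearMap.finrank_le_finrank_of_injective hL
    · obtain ⟨u, hu⟩ := aux_lower hn B hl
      simpa using hu.fintype_card_le_finrank
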